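/- If Uη = qηU for a degree-0 element U and degree-1 element η, then d_q^N U = (1−q)(1−q^2)⋯(1−q^{N−1})(η^N U − U η^N). In particular, if η^N is central (e.g. η^N = 1), then d_q^N U = 0 whenever N ≥ 2. -/

import Mathlib

/-- The `q`-differential of a homogeneous element `B` of degree `b`:
`d_q B = η B - q^b B η`. -/
noncomputable def dq {A : Type*} [Ring A] [Algebra ℂ A] (q : ℂ) (η : A) (b : ℕ) (B : A) : A :=
  η * B - q ^ b • (B * η)

/-- Iterated `q`-differential `d_q^n` applied to an element of degree `b`
(each application raises the degree by one). -/
noncomputable def dqPow {A : Type*} [Ring A] [Algebra ℂ A] (q : ℂ) (η : A) (b : ℕ) :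
    ℕ → A → A
  | 0, B => B
  | n + 1, B => dq q η (b + n) (dqPow q η b n B)

/-!
If `B * η = c • (η * B)`, the two terms of the `q`-differential of `B` are proportional: on degree
`b` it is `(1 - q ^ b * c) • (η * B)`, and `η * B` satisfies the same relation with the same `c`.
Iterating `n` times yields the factors `1 - q ^ (b + k) * c` with `k < n`. For `b = 0` and `c = q`,
the last of them, `1 - q ^ n`, is exactly what turns `η ^ n * B` into `η ^ n * B - B * η ^ n`.
-/

section ScalarCommutation

lemma mul_pow_of_mul_eq_smul {R M : Type*} [Monoid R] [Monoid M] [MulAction R M]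
    [IsScalarTower R M M] [SMulCommClass R M M] {c : R} {B η : M}
    (h : B * η = c • (η * B)) (n : ℕ) : B * η ^ n = c ^ n • (η ^ n * B) := by
  have hsemi : SemiconjBy B η (c • η) := by rw [SemiconjBy, h, smul_mul_assoc]
  rw [(hsemi.pow_right n).eq, smul_pow, smul_mul_assoc]

lemma pow_mul_mul_of_mul_eq_smul {R M : Type*} [Monoid M] [SMul R M] [SMulCommClass R M M]
    {c : R} {B η : M} (h : B * η = c • (η * B)) (n : ℕ) :
    η ^ n * B * η = c • (η * (η ^ n * B)) := by
  rw [mul_assoc, h, mul_smul_comm, ← mul_assoc, ← mul_assoc, pow_mul_comm']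

lemma pow_mul_sub_mul_pow_of_mul_eq_smul {R A : Type*} [Ring R] [Ring A] [Module R A]
    [IsScalarTower R A A] [SMulCommClass R A A] {c : R} {B η : A}
    (h : B * η = c • (η * B)) (n : ℕ) :
    η ^ n * B - B * η ^ n = (1 - c ^ n) • (η ^ n * B) := by
  rw [mul_pow_of_mul_eq_smul h, sub_smul, one_smul]

end ScalarCommutation

section QDifferential

variable {A : Type*} [Ring A] [Algebra ℂ A] (q : ℂ) {c : ℂ} {B η : A}

lemma dq_smul (r : ℂ) (b : ℕ) : dq q η b (r • B) = r • dq q η b B := by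
  rw [dq, dq, mul_smul_comm, smul_mul_assoc, smul_comm, smul_sub]

lemma dq_of_mul_eq_smul (h : B * η = c • (η * B)) (b : ℕ) :
    dq q η b B = (1 - q ^ b * c) • (η * B) := by
  rw [dq, h, smul_smul, sub_smul, one_smul]

lemma dqPow_of_mul_eq_smul (h : B * η = c • (η * B)) (b n : ℕ) :
    dqPow q η b n B = (∏ k ∈ Finset.range n, (1 - q ^ (b + k) * c)) • (η ^ n * B) := by
  induction n with
  | zero => simp [dqPow]
  | succ n ih =>
    rw [dqPow, ih, dq_smul, dq_of_mul_eq_smul q (pow_mul_mul_of_mul_eq_smul h n), smul_smul,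
      ← Finset.prod_range_succ, ← mul_assoc, ← pow_succ']

variable {q}

lemma dqPow_degree_zero_of_mul_eq_smul (h : B * η = q • (η * B)) (n : ℕ) :
    dqPow q η 0 n B = (∏ k ∈ Finset.Icc 1 n, (1 - q ^ k)) • (η ^ n * B) := by
  have hprod : ∏ k ∈ Finset.range n, (1 - q ^ (0 + k) * q) = ∏ k ∈ Finset.Icc 1 n, (1 - q ^ k) := by
    simp only [zero_add, ← pow_succ]
    rw [Finset.range_eq_Ico, Finset.prod_Ico_add' (fun k => 1 - q ^ k), zero_add,
      Finset.Ico_add_one_right_eq_Icc]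
  rw [dqPow_of_mul_eq_smul q h, hprod]

lemma dqPow_degree_zero_succ_eq_smul_sub (h : B * η = q • (η * B)) (n : ℕ) :
    dqPow q η 0 (n + 1) B =
      (∏ k ∈ Finset.Icc 1 n, (1 - q ^ k)) • (η ^ (n + 1) * B - B * η ^ (n + 1)) := by
  rw [dqPow_degree_zero_of_mul_eq_smul h, Finset.prod_Icc_succ_top (Nat.le_add_left 1 n), mul_smul,
    pow_mul_sub_mul_pow_of_mul_eq_smul h]

lemma dqPow_degree_zero_succ_eq_zero_of_commute (h : B * η = q • (η * B)) {n : ℕ}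
    (hcomm : Commute (η ^ (n + 1)) B) : dqPow q η 0 (n + 1) B = 0 := by
  rw [dqPow_degree_zero_succ_eq_smul_sub h, hcomm.eq, sub_self, smul_zero]

end QDifferential

/-- if `U η = q η U` with `deg U = 0`, `deg η = 1`, then
`d_q^N U = (1−q)(1−q^2)⋯(1−q^{N−1}) (η^N U − U η^N)`; in particular, if `η^N` is central
(e.g. `η^N = 1`) then `d_q^N U = 0` whenever `N ≥ 2`. -/
theorem dqPow_U {A : Type*} [Ring A] [Algebra ℂ A]
    (q : ℂ) (U η : A) (hUη : U * η = q • (η * U)) (N : ℕ) (hN : 1 ≤ N) :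
    dqPow q η 0 N U =
      (∏ k ∈ Finset.Icc 1 (N - 1), (1 - q ^ k)) • (η ^ N * U - U * η ^ N) ∧
    ((∀ x : A, Commute (η ^ N) x) → 2 ≤ N → dqPow q η 0 N U = 0) := by
  obtain ⟨n, rfl⟩ := Nat.exists_eq_add_of_le' hN
  exact ⟨dqPow_degree_zero_succ_eq_smul_sub hUη n,
    fun hcentral _ => dqPow_degree_zero_succ_eq_zero_of_commute hUη (hcentral U)⟩
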